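/- Let γ ∈ ℂ and a₊, a₋ ∈ ℂ with Re a₊ > 0 and Re a₋ > 0, and let l ∈ ℂ⁴ satisfy exp(4πiγ) = exp(2πi(l₁+l₂+l₃+l₄+2ia)), where a = (a₊+a₋)/2. Set k_n = −l_n + γ − ia for n = 1,…,4. Then for each δ ∈ {+,−}, the following identity of meromorphic functions of (z,y) ∈ ℂ² holds: f_δ(l;z)·K(γ; z+ia_{−δ}/2, y) + f_δ(l;−z)·K(γ; z−ia_{−δ}/2, y) = f_δ(k;y)·K(γ; z, y+ia_{−δ}/2) + f_δ(k;−y)·K(γ; z, y−ia_{−δ}/2). -/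

import Mathlib

open Complex Filter

noncomputable section

/-- `R_δ(z) = ∏_{k≥1} (1 − q_δ^{2k−1} e^{2iπz})(1 − q_δ^{2k−1} e^{−2iπz})`. -/
def Rfun (qd : ℂ) (z : ℂ) : ℂ :=
  ∏' k : ℕ, ((1 - qd ^ (2 * k + 1) * Complex.exp (2 * Real.pi * I * z)) *
    (1 - qd ^ (2 * k + 1) * Complex.exp (-(2 * Real.pi * I * z))))

/-- The elliptic gamma function
`G(z) = ∏_{m,n≥1} (1 − q₊^{2m−1}q₋^{2n−1}e^{−2iπz})/(1 − q₊^{2m−1}q₋^{2n−1}e^{2iπz})`. -/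
def Gfun (qp qm : ℂ) (z : ℂ) : ℂ :=
  ∏' p : ℕ × ℕ,
    (1 - qp ^ (2 * p.1 + 1) * qm ^ (2 * p.2 + 1) * Complex.exp (-(2 * Real.pi * I * z))) /
    (1 - qp ^ (2 * p.1 + 1) * qm ^ (2 * p.2 + 1) * Complex.exp (2 * Real.pi * I * z))

/-- `a_δ` for `δ ∈ {+,−}` (`true = +`, `false = −`). -/
def aof (ap am : ℂ) (δ : Bool) : ℂ := if δ then ap else am

/-- `f_δ(l;z) = ∏_{n=1}^4 R_δ(z+l_n+ia_{−δ}/4) / R_δ(2z−ia_δ/2)`. -/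
def fδ (ap am : ℂ) (δ : Bool) (l : Fin 4 → ℂ) (z : ℂ) : ℂ :=
  (∏ n : Fin 4, Rfun (Complex.exp (-(Real.pi : ℂ) * aof ap am δ))
      (z + l n + I * aof ap am (!δ) / 4)) /
    Rfun (Complex.exp (-(Real.pi : ℂ) * aof ap am δ)) (2 * z - I * aof ap am δ / 2)

/-- The kernel function `K(γ;z,y) = G(±z±y−γ)`. -/
def Kker (ap am γ z y : ℂ) : ℂ :=
  Gfun (Complex.exp (-(Real.pi : ℂ) * ap)) (Complex.exp (-(Real.pi : ℂ) * am)) (z + y - γ) *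
  Gfun (Complex.exp (-(Real.pi : ℂ) * ap)) (Complex.exp (-(Real.pi : ℂ) * am)) (z - y - γ) *
  Gfun (Complex.exp (-(Real.pi : ℂ) * ap)) (Complex.exp (-(Real.pi : ℂ) * am)) (-z + y - γ) *
  Gfun (Complex.exp (-(Real.pi : ℂ) * ap)) (Complex.exp (-(Real.pi : ℂ) * am)) (-z - y - γ)

/-- The infinite product `∏ᵢ (1 - uᵢ w)`, viewed as a function of `w`. -/
def linProd {ι : Type*} (u : ι → ℂ) (w : ℂ) : ℂ := ∏' i, (1 - u i * w)

section linProd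

variable {ι : Type*} {u : ι → ℂ}

lemma multipliable_linProd (hu : Summable fun i => ‖u i‖) (w : ℂ) :
    Multipliable fun i => 1 - u i * w := by
  simp only [sub_eq_add_neg]
  refine multipliable_one_add_of_summable ?_
  simpa using hu.mul_right ‖w‖

lemma linProd_ne_zero (hu : Summable fun i => ‖u i‖) {w : ℂ} (h : ∀ i, u i * w ≠ 1) :
    linProd u w ≠ 0 := by
  unfold linProd
  simp only [sub_eq_add_neg]
  refine tprod_one_add_ne_zero_of_summable (fun i => ?_) (by simpa using hu.mul_right ‖w‖)
  rw [← sub_eq_add_neg, sub_ne_zero]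
  exact (h i).symm

lemma differentiable_linProd (hu : Summable fun i => ‖u i‖) : Differentiable ℂ (linProd u) := by
  intro w
  have h : HasProdLocallyUniformlyOn (fun i x => 1 + -(u i * x)) (fun x => ∏' i, (1 + -(u i * x)))
      (Metric.ball (0 : ℂ) (‖w‖ + 1)) := by
    refine Summable.hasProdLocallyUniformlyOn_one_add (u := fun i => ‖u i‖ * (‖w‖ + 1))
      Metric.isOpen_ball (hu.mul_right _) (.of_forall fun i x hx => ?_) (fun i => by fun_prop)
    rw [norm_neg, norm_mul]
    gcongr
    exact (mem_ball_zero_iff.mp hx).le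
  have hd := h.differentiableOn (.of_forall fun s => by fun_prop) Metric.isOpen_ball
  have := (hd w (by simp)).differentiableAt (Metric.isOpen_ball.mem_nhds (by simp))
  unfold linProd
  simpa only [sub_eq_add_neg] using this

end linProd

/-- The infinite `q`-Pochhammer symbol `∏_{k ≥ 0} (1 - q ^ k w)`. -/
def qPoch (q : ℂ) : ℂ → ℂ := linProd fun k : ℕ => q ^ k

section qPoch

variable {q : ℂ}

lemma summable_norm_pow (hq : ‖q‖ < 1) : Summable fun k : ℕ => ‖q ^ k‖ := by
  simpa using summable_geometric_of_lt_one (norm_nonneg q) hq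

lemma differentiable_qPoch (hq : ‖q‖ < 1) : Differentiable ℂ (qPoch q) :=
  differentiable_linProd (summable_norm_pow hq)

lemma qPoch_eq_mul (hq : ‖q‖ < 1) (w : ℂ) : qPoch q w = (1 - w) * qPoch q (q * w) := by
  have h := multipliable_linProd (summable_norm_pow hq) (q * w)
  unfold qPoch linProd
  rw [tprod_eq_zero_mul']
  · simp only [pow_zero, one_mul, pow_succ, mul_assoc]
  · simpa only [pow_succ, mul_assoc] using h

lemma qPoch_one (hq : ‖q‖ < 1) : qPoch q 1 = 0 := by simp [qPoch_eq_mul hq 1]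

lemma exists_of_qPoch_eq_zero (hq : ‖q‖ < 1) {w : ℂ} (h : qPoch q w = 0) :
    ∃ k : ℕ, q ^ k * w = 1 := by
  contrapose! h
  exact linProd_ne_zero (summable_norm_pow hq) h

lemma one_le_norm_of_qPoch_eq_zero (hq : ‖q‖ < 1) {w : ℂ} (h : qPoch q w = 0) : 1 ≤ ‖w‖ := by
  obtain ⟨k, hk⟩ := exists_of_qPoch_eq_zero hq h
  have h1 : ‖q‖ ^ k * ‖w‖ = 1 := by simpa using congrArg norm hk
  have h2 : ‖q‖ ^ k ≤ 1 := pow_le_one₀ (norm_nonneg q) hq.le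
  nlinarith [norm_nonneg w]

lemma deriv_qPoch (hq : ‖q‖ < 1) (w : ℂ) :
    deriv (qPoch q) w = -qPoch q (q * w) + (1 - w) * (deriv (qPoch q) (q * w) * q) := by
  have h1 : HasDerivAt (fun w => qPoch q (q * w)) (deriv (qPoch q) (q * w) * q) w := by
    have := (differentiable_qPoch hq (q * w)).hasDerivAt.comp w ((hasDerivAt_id w).const_mul q)
    simpa [Function.comp_def] using this
  have h2 := (((hasDerivAt_id w).const_sub 1).mul h1).congr_of_eventuallyEq
    (.of_forall (qPoch_eq_mul hq))
  exact h2.deriv.trans (by simp)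

lemma deriv_qPoch_ne_zero (hq : ‖q‖ < 1) (hq0 : q ≠ 0) {w : ℂ} (h : qPoch q w = 0) :
    deriv (qPoch q) w ≠ 0 := by
  obtain ⟨k, hk⟩ := exists_of_qPoch_eq_zero hq h
  induction k generalizing w with
  | zero =>
    obtain rfl : w = 1 := by simpa using hk
    rw [deriv_qPoch hq, sub_self, zero_mul, add_zero, neg_ne_zero]
    intro h0
    have := one_le_norm_of_qPoch_eq_zero hq h0
    simp only [mul_one] at this
    linarith
  | succ k ih =>
    have hw : w ≠ 1 := by
      rintro rfl
      have h1 : ‖q‖ ^ (k + 1) = 1 := by simpa using congrArg norm hk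
      exact (pow_lt_one₀ (norm_nonneg q) hq (by simp)).ne h1
    have h0 : qPoch q (q * w) = 0 := by
      rw [qPoch_eq_mul hq] at h
      exact (mul_eq_zero.mp h).resolve_left (sub_ne_zero.mpr hw.symm)
    have := ih h0 (by rw [← hk]; ring)
    rw [deriv_qPoch hq, h0]
    simp [this, hq0, sub_ne_zero, hw.symm]

end qPoch

/-- The multiplicative theta function `θ(w) = ∏_{k ≥ 0} (1 - q ^ k w) (1 - q ^ (k + 1) / w)`. -/
def qTheta (q w : ℂ) : ℂ := qPoch q w * qPoch q (q / w)

section qTheta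

variable {q : ℂ}

lemma qTheta_one (hq : ‖q‖ < 1) : qTheta q 1 = 0 := by simp [qTheta, qPoch_one hq]

lemma qTheta_mul (hq : ‖q‖ < 1) (hq0 : q ≠ 0) {w : ℂ} (hw : w ≠ 0) :
    qTheta q (q * w) = -qTheta q w / w := by
  have h1 : q / (q * w) = w⁻¹ := by field_simp
  unfold qTheta
  rw [h1, qPoch_eq_mul hq w, qPoch_eq_mul hq w⁻¹, ← div_eq_mul_inv]
  field_simp
  ring

lemma qTheta_div (hq0 : q ≠ 0) (w : ℂ) : qTheta q (q / w) = qTheta q w := by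
  unfold qTheta
  rw [div_div_cancel₀ hq0, mul_comm]

lemma qTheta_inv (hq : ‖q‖ < 1) (hq0 : q ≠ 0) {w : ℂ} (hw : w ≠ 0) :
    qTheta q w⁻¹ = -qTheta q w / w := by
  rw [← qTheta_div hq0 w, div_eq_mul_inv q w, qTheta_mul hq hq0 (inv_ne_zero hw)]
  field_simp

lemma differentiableAt_qTheta (hq : ‖q‖ < 1) {w : ℂ} (hw : w ≠ 0) :
    DifferentiableAt ℂ (qTheta q) w := by
  unfold qTheta
  exact (differentiable_qPoch hq w).mul
    ((differentiable_qPoch hq (q / w)).comp w (by fun_prop (disch := exact hw)))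

lemma exists_of_qTheta_eq_zero (hq : ‖q‖ < 1) (hq0 : q ≠ 0) {w : ℂ} (hw : w ≠ 0)
    (h : qTheta q w = 0) : ∃ k : ℤ, w = q ^ k := by
  rcases mul_eq_zero.mp h with h | h <;> obtain ⟨k, hk⟩ := exists_of_qPoch_eq_zero hq h
  · refine ⟨-k, ?_⟩
    rw [zpow_neg, zpow_natCast]
    exact eq_inv_of_mul_eq_one_right hk
  · refine ⟨k + 1, ?_⟩
    rw [zpow_add₀ hq0, zpow_natCast, zpow_one]
    field_simp at hk
    rw [← hk]

lemma deriv_qTheta_ne_zero (hq : ‖q‖ < 1) (hq0 : q ≠ 0) {w : ℂ} (hw : w ≠ 0)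
    (h : qTheta q w = 0) : deriv (qTheta q) w ≠ 0 := by
  have hinv : HasDerivAt (fun w => q / w) (-q / w ^ 2) w := by
    simpa [div_eq_mul_inv] using (hasDerivAt_inv hw).const_mul q
  have hd : deriv (qTheta q) w = deriv (qPoch q) w * qPoch q (q / w)
      + qPoch q w * (deriv (qPoch q) (q / w) * (-q / w ^ 2)) :=
    ((differentiable_qPoch hq w).hasDerivAt.mul
      ((differentiable_qPoch hq (q / w)).hasDerivAt.comp w hinv)).deriv
  have hnot : ¬ (qPoch q w = 0 ∧ qPoch q (q / w) = 0) := by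
    rintro ⟨h1, h2⟩
    have h1 := one_le_norm_of_qPoch_eq_zero hq h1
    have h2 := one_le_norm_of_qPoch_eq_zero hq h2
    rw [norm_div, one_le_div (by positivity)] at h2
    linarith
  rw [hd]
  rcases mul_eq_zero.mp h with h | h
  · rw [h, zero_mul, add_zero]
    exact mul_ne_zero (deriv_qPoch_ne_zero hq hq0 h) fun h' => hnot ⟨h, h'⟩
  · rw [h, mul_zero, zero_add]
    exact mul_ne_zero (fun h' => hnot ⟨h', h⟩)
      (mul_ne_zero (deriv_qPoch_ne_zero hq hq0 h) (by simp [hq0, hw]))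

end qTheta

/-- A holomorphic function on `ℂ \ {0}` is divisible by one with simple zeros if it vanishes at
those zeros. -/
lemma exists_eq_mul_of_simple_zeros {f g : ℂ → ℂ} (hf : ∀ w ≠ 0, DifferentiableAt ℂ f w)
    (hg : ∀ w ≠ 0, DifferentiableAt ℂ g w) (hg' : ∀ w ≠ 0, g w = 0 → deriv g w ≠ 0)
    (hfg : ∀ w ≠ 0, g w = 0 → f w = 0) :
    ∃ h : ℂ → ℂ, (∀ w ≠ 0, DifferentiableAt ℂ h w) ∧ ∀ w ≠ 0, f w = g w * h w := by
  classical
  refine ⟨fun w => if g w = 0 then deriv f w / deriv g w else f w / g w, fun w hw => ?_,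
    fun w hw => ?_⟩
  · by_cases h0 : g w = 0
    · have hslope : ∀ F : ℂ → ℂ, (∀ w ≠ 0, DifferentiableAt ℂ F w) →
          DifferentiableAt ℂ (dslope F w) w := fun F hF =>
        ((Complex.differentiableOn_dslope (isOpen_ne.mem_nhds hw)).mpr
          fun x hx => (hF x hx).differentiableWithinAt).differentiableAt (isOpen_ne.mem_nhds hw)
      have hgne : dslope g w w ≠ 0 := by
        rw [dslope_same]
        exact hg' w hw h0
      refine ((hslope f hf).div (hslope g hg) hgne).congr_of_eventuallyEq ?_
      filter_upwards [(hslope g hg).continuousAt.eventually_ne hgne] with x hx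
      rcases eq_or_ne x w with rfl | hxw
      · simp [h0]
      · have hsub : x - w ≠ 0 := sub_ne_zero.mpr hxw
        rw [dslope_of_ne _ hxw, slope_def_field, h0, sub_zero] at hx
        have hgx : g x ≠ 0 := fun h => hx (by simp [h])
        simp only [hgx, if_false, Pi.div_apply]
        rw [dslope_of_ne _ hxw, dslope_of_ne _ hxw, slope_def_field, slope_def_field, h0,
          hfg w hw h0, sub_zero, sub_zero]
        field_simp
    · refine ((hf w hw).div (hg w hw) h0).congr_of_eventuallyEq ?_
      filter_upwards [(hg w hw).continuousAt.eventually_ne h0] with x hx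
      simp [hx]
  · by_cases h0 : g w = 0
    · simp [h0, hfg w hw h0]
    · simp [h0, mul_div_cancel₀]

/-- Two functions continuous on `ℂ \ {0}` agree there if they agree off a countable set. -/
lemma eq_of_eq_off_countable {f g : ℂ → ℂ} {s : Set ℂ} (hs : s.Countable)
    (hf : ∀ w ≠ 0, ContinuousAt f w) (hg : ∀ w ≠ 0, ContinuousAt g w)
    (h : ∀ w ≠ 0, w ∉ s → f w = g w) {w : ℂ} (hw : w ≠ 0) : f w = g w := by
  by_contra hne
  have hev : ∀ᶠ x in nhds w, f x - g x ≠ 0 ∧ x ≠ 0 :=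
    (((hf w hw).sub (hg w hw)).eventually_ne (sub_ne_zero.mpr hne)).and (isOpen_ne.mem_nhds hw)
  obtain ⟨x, hxs, hx, hx0⟩ :=
    ((mem_closure_iff_frequently.mp ((hs.dense_compl ℂ) w)).and_eventually hev).exists
  exact hx (sub_eq_zero.mpr (h x hx0 hxs))

lemma eq_zpow_mul_of_forall_mul {α : Type*} {q : ℂ} (hq0 : q ≠ 0) {f : ℂ → α}
    (h : ∀ w ≠ 0, f (q * w) = f w) (k : ℤ) {w : ℂ} (hw : w ≠ 0) : f (q ^ k * w) = f w := by
  induction k with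
  | zero => simp
  | succ n ih =>
    rw [← ih, zpow_add_one₀ hq0, mul_comm _ q, mul_assoc,
      h _ (mul_ne_zero (zpow_ne_zero _ hq0) hw)]
  | pred n ih =>
    rw [← ih, ← h (q ^ (-(n : ℤ) - 1) * w) (mul_ne_zero (zpow_ne_zero _ hq0) hw), ← mul_assoc,
      ← zpow_one_add₀ hq0]
    congr 3
    ring

/-- A holomorphic function on the torus `(ℂ \ {0}) / q ^ ℤ` is constant. -/
lemma eq_of_forall_mul_eq {q : ℂ} (hq : ‖q‖ < 1) (hq0 : q ≠ 0) {f : ℂ → ℂ}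
    (hf : ∀ w ≠ 0, DifferentiableAt ℂ f w) (h : ∀ w ≠ 0, f (q * w) = f w) {w z : ℂ}
    (hw : w ≠ 0) (hz : z ≠ 0) : f w = f z := by
  have hqpos : 0 < ‖q‖ := norm_pos_iff.mpr hq0
  have hK : IsCompact (Metric.closedBall (0 : ℂ) 1 ∩ {x | ‖q‖ ≤ ‖x‖}) :=
    (isCompact_closedBall _ _).inter_right (isClosed_le continuous_const continuous_norm)
  obtain ⟨B, hB⟩ := hK.exists_bound_of_continuousOn (f := f) fun x hx =>
    (hf x (norm_pos_iff.mp (hqpos.trans_le hx.2))).continuousAt.continuousWithinAt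
  have hbound : ∀ x ≠ 0, ‖f x‖ ≤ B := by
    intro x hx
    obtain ⟨k, hk1, hk2⟩ := exists_mem_Ico_zpow (norm_pos_iff.mpr hx) ((one_lt_inv₀ hqpos).mpr hq)
    rw [← eq_zpow_mul_of_forall_mul hq0 h (k + 1) hx]
    refine hB _ ⟨?_, ?_⟩
    · rw [mem_closedBall_zero_iff, norm_mul, norm_zpow]
      rw [inv_zpow] at hk2
      have := (lt_inv_comm₀ (norm_pos_iff.mpr hx) (by positivity)).mp hk2
      rw [← le_div_iff₀ (norm_pos_iff.mpr hx), one_div]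
      exact this.le
    · rw [Set.mem_ofPred_eq, norm_mul, norm_zpow, zpow_add_one₀ hqpos.ne', mul_assoc, mul_comm ‖q‖,
        ← mul_assoc]
      rw [inv_zpow, inv_le_iff_one_le_mul₀' (by positivity)] at hk1
      nlinarith
  have hd : Differentiable ℂ fun x => f (exp x) := fun x =>
    (hf _ (exp_ne_zero x)).comp x differentiable_exp.differentiableAt
  have hb : Bornology.IsBounded (Set.range fun x => f (exp x)) := by
    refine isBounded_iff_forall_norm_le.mpr ⟨B, ?_⟩
    rintro _ ⟨x, rfl⟩
    exact hbound _ (exp_ne_zero x)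
  simpa [exp_log hw, exp_log hz] using hd.apply_eq_apply_of_bounded hb (log w) (log z)

section qTheta

variable {q : ℂ}

lemma countable_qTheta_zeros (hq : ‖q‖ < 1) (hq0 : q ≠ 0) {c : ℂ} (hc : c ≠ 0) :
    {w : ℂ | w ≠ 0 ∧ qTheta q (w / c) = 0}.Countable := by
  refine (Set.countable_range fun k : ℤ => c * q ^ k).mono ?_
  rintro w ⟨hw, h⟩
  obtain ⟨k, hk⟩ := exists_of_qTheta_eq_zero hq hq0 (div_ne_zero hw hc) h
  exact ⟨k, by simp only [← hk]; field_simp⟩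

/-- A nonzero theta function of degree `n` has at most `n` zeros modulo `q ^ ℤ`. -/
lemma eq_zero_of_quasiperiodic (hq : ‖q‖ < 1) (hq0 : q ≠ 0) (n : ℕ) {f : ℂ → ℂ} {C : ℂ}
    (hC : C ≠ 0) (hf : ∀ w ≠ 0, DifferentiableAt ℂ f w)
    (hqp : ∀ w ≠ 0, f (q * w) * w ^ n = C * f w) {l : List ℂ} (hl : l.length = n + 1)
    (hz : ∀ z ∈ l, z ≠ 0 ∧ f z = 0) (hne : l.Pairwise fun a b => qTheta q (b / a) ≠ 0) {w : ℂ}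
    (hw : w ≠ 0) : f w = 0 := by
  induction n generalizing f C l w with
  | zero => ?_
  | succ n ih => ?_
  all_goals
    obtain ⟨z, l, rfl⟩ := List.exists_cons_of_length_eq_add_one hl
    obtain ⟨hz0, hfz⟩ := hz z (by simp)
    have hdiff : ∀ c ≠ 0, ∀ w ≠ 0, DifferentiableAt ℂ (fun w => qTheta q (w / c)) w :=
      fun c hc w hw => (differentiableAt_qTheta hq (div_ne_zero hw hc)).comp w
        (f := fun w => w / c) (by fun_prop)
    have hvanish : ∀ w ≠ 0, qTheta q (w / z) = 0 → f w = 0 := by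
      intro w hw h
      obtain ⟨k, hk⟩ := exists_of_qTheta_eq_zero hq hq0 (div_ne_zero hw hz0) h
      have := eq_zpow_mul_of_forall_mul hq0 (f := fun w => f w = 0) (fun x hx => propext
        ⟨fun h => by simpa [h, hC] using (hqp x hx).symm,
          fun h => by simpa [h, hx] using hqp x hx⟩) k hz0
      rw [← hk, div_mul_cancel₀ _ hz0] at this
      exact this.mpr hfz
    obtain ⟨H, hH, hfH⟩ := exists_eq_mul_of_simple_zeros hf (hdiff z hz0) (fun x hx h => by
      have h1 := (differentiableAt_qTheta hq (div_ne_zero hx hz0)).hasDerivAt.comp x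
        ((hasDerivAt_id x).div_const z)
      have h2 := h1.deriv
      simp only [Function.comp_def, id] at h2
      rw [h2]
      exact mul_ne_zero (deriv_qTheta_ne_zero hq hq0 (div_ne_zero hx hz0) h) (by simp [hz0]))
      hvanish
    have hmul : ∀ c ≠ 0, ∀ w ≠ 0, qTheta q (q * w / c) = -qTheta q (w / c) * c / w := by
      intro c hc w hw
      rw [mul_div_assoc, qTheta_mul hq hq0 (div_ne_zero hw hc)]
      field_simp
    have hcont : ∀ w ≠ 0, ContinuousAt (fun w => H (q * w)) w := fun w hw =>
      ((hH _ (mul_ne_zero hq0 hw)).continuousAt).comp (f := fun w => q * w) (by fun_prop)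
  · have hHq : ∀ w ≠ 0, H (q * w) = -(C / z) * (w * H w) := by
      intro w hw
      refine eq_of_eq_off_countable (f := fun w => H (q * w))
        (g := fun w => -(C / z) * (w * H w)) (countable_qTheta_zeros hq hq0 hz0) hcont
        (fun w hw => by have := (hH w hw).continuousAt; fun_prop) (fun x hx hxs => ?_) hw
      have h0 : qTheta q (x / z) ≠ 0 := fun h => hxs ⟨hx, h⟩
      have h1 := hqp x hx
      rw [hfH x hx, hfH _ (mul_ne_zero hq0 hx), hmul z hz0 x hx] at h1
      field_simp at h1 ⊢
      linear_combination -h1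
    have hc : z / C ≠ 0 := div_ne_zero hz0 hC
    have hJ : ∀ x ≠ 0, H x * qTheta q (x / (z / C)) = 0 := by
      intro x hx
      rw [eq_of_forall_mul_eq hq hq0 (f := fun x => H x * qTheta q (x / (z / C)))
        (fun x hx => (hH x hx).mul (hdiff _ hc x hx)) (fun x hx => ?_) hx hc]
      · simp [div_self hc, qTheta_one hq]
      · rw [hHq x hx, hmul _ hc x hx]
        field_simp
    rw [hfH w hw, eq_of_eq_off_countable (f := H) (g := 0) (countable_qTheta_zeros hq hq0 hc)
      (fun w hw => (hH w hw).continuousAt) (fun w hw => continuousAt_const) (fun x hx hxs => ?_) hw]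
    · simp
    · exact (mul_eq_zero.mp (hJ x hx)).resolve_right fun h => hxs ⟨hx, h⟩
  · have hHq : ∀ w ≠ 0, H (q * w) * w ^ n = -(C / z) * H w := by
      intro w hw
      refine eq_of_eq_off_countable (f := fun w => H (q * w) * w ^ n)
        (g := fun w => -(C / z) * H w) (countable_qTheta_zeros hq hq0 hz0)
        (fun w hw => (hcont w hw).mul (by fun_prop))
        (fun w hw => by have := (hH w hw).continuousAt; fun_prop) (fun x hx hxs => ?_) hw
      have h0 : qTheta q (x / z) ≠ 0 := fun h => hxs ⟨hx, h⟩
      have h1 := hqp x hx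
      rw [hfH x hx, hfH _ (mul_ne_zero hq0 hx), hmul z hz0 x hx] at h1
      field_simp at h1 ⊢
      refine mul_left_cancel₀ hx ?_
      linear_combination -h1
    rw [List.pairwise_cons] at hne
    rw [hfH w hw, ih (neg_ne_zero.mpr (div_ne_zero hC hz0)) hH hHq (by simpa using hl)
      (fun x hx => ?_) hne.2 hw, mul_zero]
    obtain ⟨hx0, hfx⟩ := hz x (by simp [hx])
    refine ⟨hx0, ?_⟩
    rw [hfH x hx0] at hfx
    exact (mul_eq_zero.mp hfx).resolve_left (hne.1 x hx)

end qTheta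

section KernelDefect

variable {q : ℂ} {t : Fin 4 → ℂ} {G v w : ℂ}

/-- The numerator of the first term of the kernel identity, in multiplicative variables. -/
def kernelTerm (q : ℂ) (t : Fin 4 → ℂ) (G v w : ℂ) : ℂ :=
  (∏ n, qTheta q (t n * w)) * (qTheta q (w * v / G) * qTheta q (w / (v * G)))

/-- The numerator of the first term of the dual side of the kernel identity. -/
def dualTerm (q : ℂ) (t : Fin 4 → ℂ) (G v w : ℂ) : ℂ :=
  (∏ n, qTheta q (q * v * G / t n)) * (qTheta q (w * v / G) * qTheta q (v / (w * G)))

/-- The difference of the two sides of the kernel identity, with denominators cleared. -/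
def kernelDefect (q : ℂ) (t : Fin 4 → ℂ) (G v w : ℂ) : ℂ :=
  qTheta q (v ^ 2) * (kernelTerm q t G v w - w ^ 2 * kernelTerm q t G v w⁻¹) -
    qTheta q (w ^ 2) * (dualTerm q t G v w - v ^ 2 * dualTerm q t G v⁻¹ w)

lemma kernelTerm_inv_left : kernelTerm q t G v⁻¹ w = kernelTerm q t G v w := by
  have h1 : w * v⁻¹ / G = w / (v * G) := by field_simp
  have h2 : w / (v⁻¹ * G) = w * v / G := by field_simp
  rw [kernelTerm, h1, h2, kernelTerm]
  ring

lemma dualTerm_inv_right : dualTerm q t G v w⁻¹ = dualTerm q t G v w := by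
  have h1 : w⁻¹ * v / G = v / (w * G) := by field_simp
  have h2 : v / (w⁻¹ * G) = w * v / G := by field_simp
  rw [dualTerm, h1, h2, dualTerm]
  ring

lemma differentiableAt_kernelDefect (hq : ‖q‖ < 1) (hq0 : q ≠ 0) {t : Fin 4 → ℂ → ℂ}
    {G v w : ℂ → ℂ} {x : ℂ} (ht : ∀ n, DifferentiableAt ℂ (t n) x) (hG : DifferentiableAt ℂ G x)
    (hv : DifferentiableAt ℂ v x) (hw : DifferentiableAt ℂ w x) (ht0 : ∀ n, t n x ≠ 0)
    (hG0 : G x ≠ 0) (hv0 : v x ≠ 0) (hw0 : w x ≠ 0) :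
    DifferentiableAt ℂ (fun x => kernelDefect q (fun n => t n x) (G x) (v x) (w x)) x := by
  have hθ : ∀ {f : ℂ → ℂ}, DifferentiableAt ℂ f x → f x ≠ 0 →
      DifferentiableAt ℂ (fun x => qTheta q (f x)) x :=
    fun hf h => (differentiableAt_qTheta hq h).comp x hf
  have hterm : ∀ {v w : ℂ → ℂ}, DifferentiableAt ℂ v x → DifferentiableAt ℂ w x → v x ≠ 0 →
      w x ≠ 0 → DifferentiableAt ℂ (fun x => kernelTerm q (fun n => t n x) (G x) (v x) (w x)) x := by
    intro v w hv hw hv0 hw0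
    unfold kernelTerm
    refine (DifferentiableAt.fun_finsetProd fun n _ => hθ ((ht n).mul hw) (by simp [ht0, hw0])).mul
      ((hθ ?_ ?_).mul (hθ ?_ ?_))
    · exact (hw.mul hv).div hG hG0
    · simp [*]
    · exact hw.div (hv.mul hG) (by simp [*])
    · simp [*]
  have hdual : ∀ {v w : ℂ → ℂ}, DifferentiableAt ℂ v x → DifferentiableAt ℂ w x → v x ≠ 0 →
      w x ≠ 0 → DifferentiableAt ℂ (fun x => dualTerm q (fun n => t n x) (G x) (v x) (w x)) x := by
    intro v w hv hw hv0 hw0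
    unfold dualTerm
    refine (DifferentiableAt.fun_finsetProd fun n _ => hθ
      (((hv.const_mul q).mul hG).div (ht n) (ht0 n)) (by simp [*])).mul
      ((hθ ?_ ?_).mul (hθ ?_ ?_))
    · exact (hw.mul hv).div hG hG0
    · simp [*]
    · exact hv.div (hw.mul hG) (by simp [*])
    · simp [*]
  have hvi := hv.inv hv0
  have hwi := hw.inv hw0
  exact ((hθ (hv.pow 2) (by simp [*])).mul ((hterm hv hw hv0 hw0).sub ((hw.pow 2).mul
    (hterm hv hwi hv0 (by simp [*]))))).sub ((hθ (hw.pow 2) (by simp [*])).mul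
    ((hdual hv hw hv0 hw0).sub ((hv.pow 2).mul (hdual hvi hw (by simp [*]) hw0))))

section

variable (hq : ‖q‖ < 1) (hq0 : q ≠ 0) (ht0 : ∀ n, t n ≠ 0) (hG : G ≠ 0) (hv : v ≠ 0)
  (ht : ∏ n, t n = q ^ 2 * G ^ 2)

include hq hq0

lemma qTheta_inv_sq (hw : w ≠ 0) : qTheta q (w⁻¹ ^ 2) * w ^ 2 = -qTheta q (w ^ 2) := by
  rw [inv_pow, qTheta_inv hq hq0 (pow_ne_zero 2 hw)]
  field_simp

lemma kernelDefect_inv_right (hw : w ≠ 0) :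
    kernelDefect q t G v w⁻¹ * w ^ 2 = -kernelDefect q t G v w := by
  have h := qTheta_inv_sq hq hq0 hw
  simp only [kernelDefect, dualTerm_inv_right, inv_inv]
  have hw2 : w⁻¹ ^ 2 * w ^ 2 = 1 := by field_simp
  linear_combination (-qTheta q (v ^ 2) * kernelTerm q t G v w) * hw2 -
    (dualTerm q t G v w - v ^ 2 * dualTerm q t G v⁻¹ w) * h

include hv in
lemma kernelDefect_inv_left :
    kernelDefect q t G v⁻¹ w * v ^ 2 = -kernelDefect q t G v w := by
  have h := qTheta_inv_sq hq hq0 hv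
  simp only [kernelDefect, kernelTerm_inv_left, inv_inv]
  have hv2 : v⁻¹ ^ 2 * v ^ 2 = 1 := by field_simp
  linear_combination (qTheta q (w ^ 2) * dualTerm q t G v w) * hv2 +
    (kernelTerm q t G v w - w ^ 2 * kernelTerm q t G v w⁻¹) * h

include ht0 hG hv ht

lemma kernelTerm_mul (hw : w ≠ 0) :
    kernelTerm q t G v (q * w) * (q ^ 2 * w ^ 6) = kernelTerm q t G v w := by
  have h1 : ∏ n, qTheta q (t n * (q * w)) = (∏ n, qTheta q (t n * w)) / (q ^ 2 * G ^ 2 * w ^ 4) := by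
    rw [← ht]
    have : ∀ n, qTheta q (t n * (q * w)) = -qTheta q (t n * w) / (t n * w) := fun n => by
      rw [mul_left_comm, qTheta_mul hq hq0 (mul_ne_zero (ht0 n) hw)]
    simp only [this, Fin.prod_univ_four]
    have := ht0 0
    have := ht0 1
    have := ht0 2
    have := ht0 3
    field_simp
  rw [kernelTerm, kernelTerm, h1, mul_assoc q, mul_div_assoc q, mul_div_assoc q,
    qTheta_mul hq hq0 (by simp [hw, hv, hG]), qTheta_mul hq hq0 (by simp [hw, hv, hG])]
  generalize ∏ n, qTheta q (t n * w) = A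
  field_simp

omit ht0 ht in
lemma dualTerm_mul (hw : w ≠ 0) :
    dualTerm q t G v (q * w) * (q * w ^ 2) = dualTerm q t G v w := by
  have h1 : v / (w * G) = q * (v / (q * w * G)) := by field_simp
  rw [dualTerm, dualTerm, h1, mul_assoc q w v, mul_div_assoc q (w * v),
    qTheta_mul hq hq0 (by simp [hw, hv, hG]),
    qTheta_mul hq hq0 (w := v / (q * w * G)) (by simp [hw, hv, hG, hq0])]
  field_simp

lemma kernelDefect_mul (hw : w ≠ 0) :
    kernelDefect q t G v (q * w) * w ^ 6 = (q ^ 2)⁻¹ * kernelDefect q t G v w := by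
  have hA := kernelTerm_mul hq hq0 ht0 hG hv ht hw
  have hA' := kernelTerm_mul hq hq0 ht0 hG hv ht (w := (q * w)⁻¹) (by simp [hq0, hw])
  rw [show q * (q * w)⁻¹ = w⁻¹ by field_simp] at hA'
  have hE := dualTerm_mul (t := t) hq hq0 hG hv hw
  have hE' := dualTerm_mul (t := t) hq hq0 hG (inv_ne_zero hv) hw
  have hθ : qTheta q ((q * w) ^ 2) = qTheta q (w ^ 2) / (q * w ^ 4) := by
    rw [show (q * w) ^ 2 = q * (q * w ^ 2) by ring,
      qTheta_mul hq hq0 (mul_ne_zero hq0 (pow_ne_zero 2 hw)),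
      qTheta_mul hq hq0 (pow_ne_zero 2 hw)]
    field_simp
  simp only [kernelDefect]
  rw [hθ, ← hA, ← hA', ← hE, ← hE']
  field_simp

omit hq0 ht0 hv ht in
lemma kernelTerm_div (hv : v ≠ 0) : kernelTerm q t G v (G / v) = 0 := by
  rw [kernelTerm, show G / v * v / G = 1 by field_simp, qTheta_one hq]
  simp

omit hq0 ht0 hv ht in
lemma dualTerm_div (hv : v ≠ 0) : dualTerm q t G v (G / v) = 0 := by
  rw [dualTerm, show G / v * v / G = 1 by field_simp, qTheta_one hq]
  simp

omit ht in
lemma kernelDefect_div : kernelDefect q t G v (G / v) = 0 := by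
  have h1 : ∀ n, qTheta q (q * v⁻¹ * G / t n) = qTheta q (t n * (G / v)⁻¹) := fun n => by
    have := ht0 n
    rw [← qTheta_div hq0 (t n * _)]
    congr 1
    field_simp
  have h2 : qTheta q ((G / v) ^ 2) = -qTheta q ((G / v)⁻¹ ^ 2) / (G / v)⁻¹ ^ 2 := by
    rw [← qTheta_inv hq hq0 (by simp [hG, hv]), inv_pow, inv_inv]
  have h3 : qTheta q (v⁻¹ * v⁻¹) = -qTheta q (v ^ 2) / v ^ 2 := by
    rw [← qTheta_inv hq hq0 (by simp [hv])]
    congr 1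
    field_simp
  rw [kernelDefect, kernelTerm_div hq hG hv, dualTerm_div hq hG hv, kernelTerm, dualTerm,
    h2]
  simp only [h1]
  rw [show (G / v)⁻¹ * v / G = (G / v)⁻¹ ^ 2 by field_simp,
    show (G / v)⁻¹ / (v * G) = v⁻¹ / (G / v * G) by field_simp,
    show G / v * v⁻¹ / G = v⁻¹ * v⁻¹ by field_simp, h3]
  field_simp
  ring

omit ht0 hG hv ht in
lemma qTheta_ne_zero_of_sq {x : ℂ} (hx : x ≠ 0) (h : ∀ k : ℤ, x ^ 2 ≠ q ^ k) :
    qTheta q x ≠ 0 := by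
  intro h0
  obtain ⟨k, hk⟩ := exists_of_qTheta_eq_zero hq hq0 hx h0
  exact h (k * 2) (by rw [hk, zpow_mul]; rfl)

omit ht0 hG hv ht in
lemma qTheta_neg_one_ne_zero : qTheta q (-1) ≠ 0 := by
  intro h0
  obtain ⟨k, hk⟩ := exists_of_qTheta_eq_zero hq hq0 (by simp) h0
  have h1 : ‖q‖ ^ k = ‖q‖ ^ (0 : ℤ) := by simpa using (congrArg norm hk).symm
  obtain rfl := zpow_right_injective₀ (norm_pos_iff.mpr hq0) hq.ne h1
  norm_num at hk

omit ht0 hG hv ht in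
lemma qTheta_ne_zero_of_sq_eq {r : ℂ} (hr : r ^ 2 = q) : qTheta q r ≠ 0 := by
  intro h0
  have hr0 : r ≠ 0 := by
    rintro rfl
    exact hq0 (by simp [← hr])
  obtain ⟨k, hk⟩ := exists_of_qTheta_eq_zero hq hq0 hr0 h0
  have h1 : ‖q‖ ^ (2 * k) = ‖q‖ ^ (1 : ℤ) := by
    rw [mul_comm, zpow_mul, ← norm_zpow, ← hk, zpow_one, ← norm_zpow]
    exact congrArg norm hr
  have := zpow_right_injective₀ (norm_pos_iff.mpr hq0) hq.ne h1
  omega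

lemma kernelDefect_eq_zero_of_generic {r : ℂ} (hr : r ^ 2 = q) (h1 : ∀ k : ℤ, G ^ 2 ≠ v ^ 2 * q ^ k)
    (h2 : ∀ k : ℤ, v ^ 2 ≠ q ^ k) (h3 : ∀ k : ℤ, G ^ 2 * v ^ 2 ≠ q ^ k)
    (h4 : ∀ k : ℤ, G ^ 2 ≠ q ^ k) (hw : w ≠ 0) : kernelDefect q t G v w = 0 := by
  have hr0 : r ≠ 0 := by
    rintro rfl
    exact hq0 (by simp [← hr])
  refine eq_zero_of_quasiperiodic hq hq0 6 (C := (q ^ 2)⁻¹) (by simp [hq0])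
    (f := kernelDefect q t G v) (fun w hw => ?_)
    (fun w hw => kernelDefect_mul hq hq0 ht0 hG hv ht hw)
    (l := [1, -1, r, -r, G / v, v / G, G * v]) rfl ?_ ?_ hw
  · exact differentiableAt_kernelDefect hq hq0 (fun _ => differentiableAt_const _)
      (differentiableAt_const _) (differentiableAt_const _) differentiableAt_id ht0 hG hv hw
  · have hsymm : ∀ x : ℂ, x ≠ 0 → kernelDefect q t G v x = 0 → kernelDefect q t G v x⁻¹ = 0 := by
      intro x hx h
      have := kernelDefect_inv_right (t := t) (G := G) (v := v) hq hq0 hx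
      simpa [h, hx] using this
    have hone : ∀ x : ℂ, x ^ 2 = 1 → kernelDefect q t G v x = 0 := by
      intro x hx
      have hx' : x⁻¹ = x := inv_eq_of_mul_eq_one_left (by rw [← hx, sq])
      simp [kernelDefect, hx', hx, qTheta_one hq]
    have hroot : ∀ x : ℂ, x ^ 2 = q → kernelDefect q t G v x = 0 := by
      intro x hx
      have hx0 : x ≠ 0 := by
        rintro rfl
        exact hq0 (by simp [← hx])
      have hθ : qTheta q (x ^ 2) = 0 := by
        rw [hx, ← qTheta_div hq0, div_self hq0, qTheta_one hq]
      have := kernelTerm_mul hq hq0 ht0 hG hv ht (w := x⁻¹) (inv_ne_zero hx0)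
      rw [show q * x⁻¹ = x by rw [← hx]; field_simp] at this
      rw [kernelDefect, hθ, ← this, ← hx]
      field_simp
      simp
    have hdiv := kernelDefect_div hq hq0 ht0 hG hv
    have hdiv' := kernelDefect_div hq hq0 ht0 hG (inv_ne_zero hv)
    rw [div_inv_eq_mul] at hdiv'
    have hmul : kernelDefect q t G v (G * v) = 0 := by
      have := kernelDefect_inv_left (t := t) (G := G) (w := G * v) hq hq0 hv
      rw [hdiv', zero_mul] at this
      simpa using this.symm
    have hdivinv := hsymm _ (div_ne_zero hG hv) hdiv
    rw [inv_div] at hdivinv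
    simp only [List.mem_cons, List.not_mem_nil, or_false, forall_eq_or_imp, forall_eq]
    exact ⟨⟨by simp, hone 1 (by simp)⟩, ⟨by simp, hone _ (by simp)⟩, ⟨hr0, hroot r hr⟩,
      ⟨by simp [hr0], hroot _ (by simp [hr])⟩, ⟨by simp [hG, hv], hdiv⟩, ⟨by simp [hG, hv], hdivinv⟩,
      by simp [hG, hv], hmul⟩
  · have hm := qTheta_neg_one_ne_zero hq hq0
    have hrp := qTheta_ne_zero_of_sq_eq hq hq0 hr
    have hrm := qTheta_ne_zero_of_sq_eq hq hq0 (r := -r) (by simp [hr])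
    have hgen : ∀ a b : ℂ, a ≠ 0 → b ≠ 0 → (∃ j : ℤ, a ^ 2 = q ^ j) → (∀ k : ℤ, b ^ 2 ≠ q ^ k) →
        qTheta q (b / a) ≠ 0 := by
      rintro a b ha hb ⟨j, hj⟩ h
      refine qTheta_ne_zero_of_sq hq hq0 (div_ne_zero hb ha) fun k hk => h (k + j) ?_
      rw [zpow_add₀ hq0, ← hk, ← hj]
      field_simp
    have e1 : ∃ j : ℤ, (1 : ℂ) ^ 2 = q ^ j := ⟨0, by simp⟩
    have e2 : ∃ j : ℤ, (-1 : ℂ) ^ 2 = q ^ j := ⟨0, by simp⟩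
    have e3 : ∃ j : ℤ, r ^ 2 = q ^ j := ⟨1, by simp [hr]⟩
    have e4 : ∃ j : ℤ, (-r) ^ 2 = q ^ j := ⟨1, by simp [hr]⟩
    have hp : ∀ k : ℤ, (G / v) ^ 2 ≠ q ^ k := fun k h => h1 k (by rw [← h]; field_simp)
    have hp' : ∀ k : ℤ, (v / G) ^ 2 ≠ q ^ k := fun k h => hp (-k) (by
      rw [zpow_neg, ← h]; field_simp)
    have hp'' : ∀ k : ℤ, (G * v) ^ 2 ≠ q ^ k := fun k h => h3 k (by rw [← h]; ring)
    have n1 : G / v ≠ 0 := div_ne_zero hG hv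
    have n2 : v / G ≠ 0 := div_ne_zero hv hG
    have n3 : G * v ≠ 0 := mul_ne_zero hG hv
    have nr : -r ≠ 0 := neg_ne_zero.mpr hr0
    have hnot : ∀ x : ℂ, x ≠ 0 → (∀ k : ℤ, x ≠ q ^ k) → qTheta q x ≠ 0 := fun x hx h h0 => by
      obtain ⟨k, hk⟩ := exists_of_qTheta_eq_zero hq hq0 hx h0
      exact h k hk
    have m1 : qTheta q (v / G / (G / v)) ≠ 0 := hnot _ (div_ne_zero n2 n1) fun k h =>
      h1 (-k) (by rw [zpow_neg, ← h]; field_simp)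
    have m2 : qTheta q (G * v / (G / v)) ≠ 0 := hnot _ (div_ne_zero n3 n1) fun k h =>
      h2 k (by rw [← h]; field_simp)
    have m3 : qTheta q (G * v / (v / G)) ≠ 0 := hnot _ (div_ne_zero n3 n2) fun k h =>
      h4 k (by rw [← h]; field_simp)
    simp only [List.pairwise_cons, List.mem_cons, List.not_mem_nil, or_false, forall_eq_or_imp,
      forall_eq]
    refine ⟨⟨?_, ?_, ?_, hgen _ _ one_ne_zero n1 e1 hp, hgen _ _ one_ne_zero n2 e1 hp',
      hgen _ _ one_ne_zero n3 e1 hp''⟩, ⟨?_, ?_, hgen _ _ (by simp) n1 e2 hp,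
      hgen _ _ (by simp) n2 e2 hp', hgen _ _ (by simp) n3 e2 hp''⟩, ⟨?_, hgen _ _ hr0 n1 e3 hp,
      hgen _ _ hr0 n2 e3 hp', hgen _ _ hr0 n3 e3 hp''⟩, ⟨hgen _ _ nr n1 e4 hp,
      hgen _ _ nr n2 e4 hp', hgen _ _ nr n3 e4 hp''⟩, ⟨m1, m2⟩, m3, ?_⟩ <;>
    simp [hm, hrp, hrm, div_neg, hr0]

lemma kernelDefect_eq_zero (hv2 : qTheta q (v ^ 2) ≠ 0) (hw : w ≠ 0) :
    kernelDefect q t G v w = 0 := by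
  obtain ⟨r, hr⟩ := IsAlgClosed.exists_pow_nat_eq q (n := 2) (by simp)
  let e : Fin 4 → ℕ := ![0, 0, 0, 2]
  let s : Set ℂ := ⋃ k : ℤ, {v * r ^ k, -(v * r ^ k), r ^ k / v, -(r ^ k / v), r ^ k, -r ^ k}
  have hs : s.Countable := Set.countable_iUnion fun k => (Set.toFinite _).countable
  have hd : ∀ x ≠ 0,
      ContinuousAt (fun x => kernelDefect q (fun n => t n * (x / G) ^ e n) x v w) x := fun x hx =>
    (differentiableAt_kernelDefect hq hq0 (t := fun n x => t n * (x / G) ^ e n) (G := id)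
      (fun n => by fun_prop) (by fun_prop) (by fun_prop) (by fun_prop)
      (fun n => mul_ne_zero (ht0 n) (pow_ne_zero _ (div_ne_zero hx hG))) hx hv hw).continuousAt
  have key := eq_of_eq_off_countable (g := fun _ => 0) hs hd (fun _ _ => continuousAt_const)
    (fun x hx hxs => ?_) hG
  · simpa [div_self hG] using key
  · have hsq : ∀ k : ℤ, (r ^ k) ^ 2 = q ^ k := fun k => by
      rw [← hr, ← zpow_natCast, ← zpow_natCast, zpow_comm]
    simp only [s, Set.mem_iUnion, Set.mem_insert_iff, Set.mem_singleton_iff, not_exists,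
      not_or] at hxs
    refine kernelDefect_eq_zero_of_generic hq hq0
      (fun n => mul_ne_zero (ht0 n) (pow_ne_zero _ (div_ne_zero hx hG))) hx hv ?_ hr
      (fun k h => ?_) (fun k h => hv2 ?_) (fun k h => ?_) (fun k h => ?_) hw
    · rw [Finset.prod_mul_distrib, ht]
      simp only [e, Fin.prod_univ_four, Matrix.cons_val]
      field_simp
    · rw [← hsq, ← mul_pow, sq_eq_sq_iff_eq_or_eq_neg] at h
      exact h.elim (hxs k).1 (hxs k).2.1
    · rw [h]
      have := eq_zpow_mul_of_forall_mul hq0 (f := fun w => qTheta q w = 0) (fun x hx => by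
        simp [qTheta_mul hq hq0 hx, hx]) k one_ne_zero
      rw [mul_one] at this
      exact this.mpr (qTheta_one hq)
    · rw [← hsq, ← mul_pow, sq_eq_sq_iff_eq_or_eq_neg] at h
      obtain ⟨-, -, h1, h2, -⟩ := hxs k
      exact h.elim (fun h => h1 (eq_div_of_mul_eq hv h))
        (fun h => h2 (by rw [← neg_div]; exact eq_div_of_mul_eq hv h))
    · rw [← hsq, sq_eq_sq_iff_eq_or_eq_neg] at h
      exact h.elim (hxs k).2.2.2.2.1 (hxs k).2.2.2.2.2

/-- The kernel identity in multiplicative variables. -/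
lemma kernel_identity (hv2 : qTheta q (v ^ 2) ≠ 0) (hw2 : qTheta q (w ^ 2) ≠ 0) (hw : w ≠ 0) :
    kernelTerm q t G v w / qTheta q (w ^ 2) + kernelTerm q t G v w⁻¹ / qTheta q (w⁻¹ ^ 2) =
      dualTerm q t G v w / qTheta q (v ^ 2) + dualTerm q t G v⁻¹ w / qTheta q (v⁻¹ ^ 2) := by
  have h := kernelDefect_eq_zero hq hq0 ht0 hG hv ht hv2 hw
  have h1 := eq_div_of_mul_eq (pow_ne_zero 2 hw) (qTheta_inv_sq hq hq0 hw)
  have h2 := eq_div_of_mul_eq (pow_ne_zero 2 hv) (qTheta_inv_sq hq hq0 hv)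
  rw [kernelDefect] at h
  rw [h1, h2]
  generalize kernelTerm q t G v w⁻¹ = A at h ⊢
  generalize dualTerm q t G v⁻¹ w = B at h ⊢
  field_simp
  linear_combination h

end

end KernelDefect

section EllipticGamma

/-- The coefficients of the double product defining the elliptic gamma function. -/
def gammaCoeff (p q : ℂ) (i : ℕ × ℕ) : ℂ := p ^ (2 * i.1 + 1) * q ^ (2 * i.2 + 1)

variable {p q : ℂ}

lemma summable_norm_gammaCoeff (hp : ‖p‖ < 1) (hq : ‖q‖ < 1) :
    Summable fun i => ‖gammaCoeff p q i‖ := by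
  have h : ∀ {r : ℂ}, ‖r‖ < 1 → Summable fun n : ℕ => ‖r‖ ^ (2 * n + 1) := fun {r} hr =>
    (summable_geometric_of_lt_one (norm_nonneg r) hr).comp_injective (i := fun n => 2 * n + 1)
      fun a b hab => by simpa using hab
  simpa [gammaCoeff] using (h hp).mul_of_nonneg (h hq) (fun _ => by positivity)
    (fun _ => by positivity)

lemma linProd_gammaCoeff (hp : ‖p‖ < 1) (hq : ‖q‖ < 1) (w : ℂ) :
    linProd (gammaCoeff p q) w =
      qPoch (p ^ 2) (p * q * w) * linProd (gammaCoeff p q) (q ^ 2 * w) := by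
  have hp2 : ‖p ^ 2‖ < 1 := by
    rw [norm_pow]
    exact pow_lt_one₀ (norm_nonneg p) hp two_ne_zero
  have hq2 : ‖q ^ 2‖ < 1 := by
    rw [norm_pow]
    exact pow_lt_one₀ (norm_nonneg q) hq two_ne_zero
  have hfac : ∀ x m n, 1 - gammaCoeff p q (m, n) * x =
      1 - (q ^ 2) ^ n * ((p ^ 2) ^ m * (p * q * x)) := fun x m n => by
    simp only [gammaCoeff]
    ring
  have hfib : ∀ x m, HasProd (fun n => 1 - gammaCoeff p q (m, n) * x)
      (qPoch (q ^ 2) ((p ^ 2) ^ m * (p * q * x))) := fun x m => by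
    simp only [hfac]
    exact (multipliable_linProd (summable_norm_pow hq2) _).hasProd
  have hprod : ∀ x, HasProd (fun m => qPoch (q ^ 2) ((p ^ 2) ^ m * (p * q * x)))
      (linProd (gammaCoeff p q) x) := fun x =>
    (multipliable_linProd (summable_norm_gammaCoeff hp hq) x).hasProd.prod_fiberwise (hfib x)
  refine (hprod w).unique ?_
  convert (multipliable_linProd (summable_norm_pow hp2) (p * q * w)).hasProd.mul
    (hprod (q ^ 2 * w)) using 2 with m
  · rw [qPoch_eq_mul hq2]
    congr 2
    ring
  · rfl

/-- The coordinate `exp (2πiz)` in which theta and gamma functions are multiplicative. -/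
def expCoord (z : ℂ) : ℂ := exp (2 * Real.pi * I * z)

lemma expCoord_ne_zero (z : ℂ) : expCoord z ≠ 0 := exp_ne_zero _

lemma expCoord_add (x y : ℂ) : expCoord (x + y) = expCoord x * expCoord y := by
  rw [expCoord, mul_add, exp_add, expCoord, expCoord]

lemma expCoord_neg (x : ℂ) : expCoord (-x) = (expCoord x)⁻¹ := by
  rw [expCoord, mul_neg, exp_neg, expCoord]

lemma expCoord_sub (x y : ℂ) : expCoord (x - y) = expCoord x / expCoord y := by
  rw [sub_eq_add_neg, expCoord_add, expCoord_neg, div_eq_mul_inv]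

lemma Rfun_eq_qTheta (hq : ‖q‖ < 1) (hq0 : q ≠ 0) (z : ℂ) :
    Rfun q z = qTheta (q ^ 2) (q * expCoord z) := by
  have hq2 : ‖q ^ 2‖ < 1 := by
    rw [norm_pow]
    exact pow_lt_one₀ (norm_nonneg q) hq two_ne_zero
  have hz := expCoord_ne_zero z
  rw [show qTheta (q ^ 2) (q * expCoord z) =
      qPoch (q ^ 2) (q * expCoord z) * qPoch (q ^ 2) (q * (expCoord z)⁻¹) by
    rw [qTheta]
    congr 2
    field_simp]
  unfold qPoch linProd Rfun
  rw [← (multipliable_linProd (summable_norm_pow hq2) _).tprod_mul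
    (multipliable_linProd (summable_norm_pow hq2) _)]
  refine tprod_congr fun k => ?_
  rw [exp_neg, expCoord]
  ring

lemma Gfun_eq_div (hp : ‖p‖ < 1) (hq : ‖q‖ < 1) {z : ℂ}
    (hz : linProd (gammaCoeff p q) (expCoord z) ≠ 0) :
    Gfun p q z =
      linProd (gammaCoeff p q) (expCoord z)⁻¹ / linProd (gammaCoeff p q) (expCoord z) := by
  have hs := summable_norm_gammaCoeff hp hq
  rw [linProd, linProd, ← (multipliable_linProd hs _).tprod_div₀ (multipliable_linProd hs _) hz,
    ← expCoord_neg]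
  simp only [Gfun, gammaCoeff, expCoord, mul_neg]

lemma Gfun_comm (p q z : ℂ) : Gfun p q z = Gfun q p z := by
  unfold Gfun
  rw [← (Equiv.prodComm ℕ ℕ).tprod_eq]
  refine tprod_congr fun i => ?_
  simp only [Equiv.prodComm_apply, Prod.fst_swap, Prod.snd_swap]
  ring

lemma expCoord_I_mul_div_two (a : ℂ) : expCoord (I * a / 2) = exp (-(Real.pi : ℂ) * a) := by
  rw [expCoord]
  congr 1
  linear_combination (Real.pi * a) * I_sq

/-- The first-order difference equation of the elliptic gamma function. -/
lemma Gfun_add_half_period {p a : ℂ} (hp : ‖p‖ < 1) (hp0 : p ≠ 0)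
    (hq : ‖exp (-(Real.pi : ℂ) * a)‖ < 1) {x : ℂ}
    (hx : linProd (gammaCoeff p (exp (-(Real.pi : ℂ) * a))) (expCoord (x - I * a / 2)) ≠ 0) :
    Gfun p (exp (-(Real.pi : ℂ) * a)) (x + I * a / 2) =
      Rfun p x * Gfun p (exp (-(Real.pi : ℂ) * a)) (x - I * a / 2) := by
  have hE := expCoord_I_mul_div_two a
  set q := exp (-(Real.pi : ℂ) * a)
  have hq0 : q ≠ 0 := exp_ne_zero _
  have hw := expCoord_ne_zero x
  have h1 := linProd_gammaCoeff hp hq (expCoord x / q)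
  have h2 := linProd_gammaCoeff hp hq (expCoord x * q)⁻¹
  rw [show p * q * (expCoord x / q) = p * expCoord x by field_simp,
    show q ^ 2 * (expCoord x / q) = expCoord x * q by field_simp] at h1
  rw [show p * q * (expCoord x * q)⁻¹ = p ^ 2 / (p * expCoord x) by field_simp,
    show q ^ 2 * (expCoord x * q)⁻¹ = (expCoord x / q)⁻¹ by field_simp] at h2
  rw [expCoord_sub, hE] at hx
  rw [h1] at hx
  have hx' := mul_ne_zero_iff.mp hx
  rw [Gfun_eq_div hp hq (by rw [expCoord_add, hE]; exact hx'.2),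
    Gfun_eq_div hp hq (by rw [expCoord_sub, hE, h1]; exact hx), expCoord_add, expCoord_sub, hE, h1,
    h2, Rfun_eq_qTheta hp hp0, qTheta]
  have := hx'.1
  have := hx'.2
  generalize (expCoord x / q)⁻¹ = A
  generalize p ^ 2 / (p * expCoord x) = B
  field_simp

lemma countable_expCoord_preimage {s : Set ℂ} (hs : s.Countable) : (expCoord ⁻¹' s).Countable := by
  rw [← Set.biUnion_preimage_singleton]
  refine hs.biUnion fun c _ => ?_
  rcases (expCoord ⁻¹' {c}).eq_empty_or_nonempty with h | ⟨x₀, hx₀⟩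
  · simp [h]
  · refine (Set.countable_range fun n : ℤ => x₀ + n).mono fun x hx => ?_
    obtain ⟨n, hn⟩ := exp_eq_exp_iff_exists_int.mp (hx.trans hx₀.symm)
    refine ⟨n, mul_left_cancel₀ two_pi_I_ne_zero ?_⟩
    linear_combination -hn

lemma continuous_expCoord : Continuous expCoord := by
  unfold expCoord
  fun_prop

end EllipticGamma

lemma isOpen_and_dense_ne_zero_comp_affine {f : ℂ → ℂ} (hf : Continuous f)
    (hf0 : {x | f x = 0}.Countable) (a b c : ℂ) (ha : a ≠ 0 ∨ b ≠ 0) :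
    IsOpen {x : ℂ × ℂ | f (a * x.1 + b * x.2 + c) ≠ 0} ∧
      Dense {x : ℂ × ℂ | f (a * x.1 + b * x.2 + c) ≠ 0} := by
  let L : ℂ × ℂ →L[ℂ] ℂ := a • ContinuousLinearMap.fst ℂ ℂ ℂ + b • ContinuousLinearMap.snd ℂ ℂ ℂ
  have hL : Function.Surjective L := fun x => by
    rcases ha with ha | hb
    · exact ⟨(x / a, 0), by simp [L, mul_div_cancel₀, ha]⟩
    · exact ⟨(0, x / b), by simp [L, mul_div_cancel₀, hb]⟩
  have hopen : IsOpenMap fun x : ℂ × ℂ => a * x.1 + b * x.2 + c :=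
    (Homeomorph.addRight c).isOpenMap.comp (L.isOpenMap hL)
  exact ⟨isOpen_ne.preimage (hf.comp (by fun_prop)), (hf0.dense_compl ℂ).preimage hopen⟩

lemma norm_exp_neg_pi_mul_lt_one {a : ℂ} (ha : 0 < a.re) : ‖exp (-(Real.pi : ℂ) * a)‖ < 1 := by
  rw [norm_exp, Real.exp_lt_one_iff]
  simpa using mul_pos Real.pi_pos ha

lemma fδ_true_eq {ap am : ℂ} (hap : 0 < ap.re) (l : Fin 4 → ℂ) (z : ℂ) :
    fδ ap am true l z =
      (∏ n, qTheta (exp (-(Real.pi : ℂ) * ap) ^ 2)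
        (exp (-(Real.pi : ℂ) * ap) * expCoord (l n + I * am / 4) * expCoord z)) /
      qTheta (exp (-(Real.pi : ℂ) * ap) ^ 2) (expCoord z ^ 2) := by
  have hq := norm_exp_neg_pi_mul_lt_one hap
  have hE := expCoord_I_mul_div_two ap
  have hq0 := exp_ne_zero (-(Real.pi : ℂ) * ap)
  simp only [fδ, aof, if_true, Bool.not_true, Bool.false_eq_true, if_false,
    Rfun_eq_qTheta hq hq0, expCoord_add, expCoord_sub, hE, two_mul z, ← sq]
  rw [mul_div_cancel₀ _ hq0]
  congr 1
  exact Finset.prod_congr rfl fun n _ => by congr 1; ring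

lemma Kker_comm (ap am γ z y : ℂ) : Kker ap am γ z y = Kker am ap γ z y := by
  simp only [Kker, Gfun_comm (exp (-(Real.pi : ℂ) * ap))]

lemma kernel_identity_true (ap am : ℂ) (hap : 0 < ap.re) (ham : 0 < am.re) (γ : ℂ)
    (l : Fin 4 → ℂ)
    (hγ : exp (4 * Real.pi * I * γ) =
      exp (2 * Real.pi * I * ((∑ n, l n) + 2 * I * ((ap + am) / 2)))) :
    ∃ U : Set (ℂ × ℂ), IsOpen U ∧ Dense U ∧ ∀ p ∈ U,
      fδ ap am true l p.1 * Kker ap am γ (p.1 + I * am / 2) p.2 +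
        fδ ap am true l (-p.1) * Kker ap am γ (p.1 - I * am / 2) p.2 =
      fδ ap am true (fun n => -l n + γ - I * ((ap + am) / 2)) p.2 *
          Kker ap am γ p.1 (p.2 + I * am / 2) +
        fδ ap am true (fun n => -l n + γ - I * ((ap + am) / 2)) (-p.2) *
          Kker ap am γ p.1 (p.2 - I * am / 2) := by
  have hE := expCoord_I_mul_div_two
  simp only [fδ_true_eq hap]
  have hGs := fun x => Gfun_add_half_period (x := x) (norm_exp_neg_pi_mul_lt_one hap)
    (exp_ne_zero _) (norm_exp_neg_pi_mul_lt_one ham)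
  have hR := Rfun_eq_qTheta (norm_exp_neg_pi_mul_lt_one hap) (exp_ne_zero _)
  have hp := norm_exp_neg_pi_mul_lt_one hap
  have hm := norm_exp_neg_pi_mul_lt_one ham
  have hEp := hE ap
  have hEm := hE am
  simp only [Kker]
  set p := exp (-(Real.pi : ℂ) * ap)
  set m := exp (-(Real.pi : ℂ) * am)
  have hp0 : p ≠ 0 := exp_ne_zero _
  have hm0 : m ≠ 0 := exp_ne_zero _
  have hp2 : ‖p ^ 2‖ < 1 := by
    rw [norm_pow]
    exact pow_lt_one₀ (norm_nonneg p) hp two_ne_zero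
  let N : ℂ → ℂ := fun x => linProd (gammaCoeff p m) (expCoord (x - I * am / 2))
  have hNcont : Continuous N := (differentiable_linProd
    (summable_norm_gammaCoeff hp hm)).continuous.comp (continuous_expCoord.comp (by fun_prop))
  have hN0 : {x | N x = 0}.Countable := by
    refine (countable_expCoord_preimage (Set.countable_range fun i =>
      m / gammaCoeff p m i)).mono fun x hx => ?_
    by_contra hx'
    refine linProd_ne_zero (summable_norm_gammaCoeff hp hm) (fun i hi => hx' ⟨i, ?_⟩) hx
    rw [expCoord_sub, hEm] at hi
    have h0 : gammaCoeff p m i ≠ 0 := mul_ne_zero (pow_ne_zero _ hp0) (pow_ne_zero _ hm0)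
    field_simp at hi ⊢
    exact hi.symm
  let T : ℂ → ℂ := fun x => qTheta (p ^ 2) (expCoord x)
  have hTcont : Continuous T := continuous_iff_continuousAt.mpr fun x =>
    (differentiableAt_qTheta hp2 (expCoord_ne_zero x)).continuousAt.comp
      continuous_expCoord.continuousAt
  have hT0 : {x | T x = 0}.Countable := by
    refine (countable_expCoord_preimage (Set.countable_range fun k : ℤ => (p ^ 2) ^ k)).mono
      fun x hx => ?_
    obtain ⟨k, hk⟩ := exists_of_qTheta_eq_zero hp2 (pow_ne_zero 2 hp0) (expCoord_ne_zero x) hx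
    exact ⟨k, hk.symm⟩
  have hU : ∀ {A B : Set (ℂ × ℂ)}, IsOpen A ∧ Dense A → IsOpen B ∧ Dense B →
      IsOpen (A ∩ B) ∧ Dense (A ∩ B) := fun hA hB =>
    ⟨hA.1.inter hB.1, hA.2.inter_of_isOpen_left hB.2 hA.1⟩
  have hd := isOpen_and_dense_ne_zero_comp_affine hNcont hN0
  have hdT := isOpen_and_dense_ne_zero_comp_affine hTcont hT0
  obtain ⟨hopen, hdense⟩ := hU (hU (hU (hd 1 1 (-γ) (by simp)) (hd 1 (-1) (-γ)
    (by simp))) (hU (hd (-1) 1 (-γ) (by simp)) (hd (-1) (-1) (-γ) (by simp))))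
    (hU (hdT 2 0 0 (by simp)) (hdT 0 2 0 (by simp)))
  refine ⟨_, hopen, hdense, ?_⟩
  rintro ⟨z, y⟩ ⟨⟨⟨h1, h2⟩, h3, h4⟩, h5, h6⟩
  simp only [Set.mem_ofPred_eq, N, T] at h1 h2 h3 h4 h5 h6
  rw [show 1 * z + 1 * y + -γ = z + y - γ by ring] at h1
  rw [show 1 * z + -1 * y + -γ = z - y - γ by ring] at h2
  rw [show -1 * z + 1 * y + -γ = -z + y - γ by ring] at h3
  rw [show -1 * z + -1 * y + -γ = -z - y - γ by ring] at h4
  rw [show 2 * z + 0 * y + 0 = z + z by ring, expCoord_add, ← sq] at h5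
  rw [show 0 * z + 2 * y + 0 = y + y by ring, expCoord_add, ← sq] at h6
  set c := I * am / 2 with hc
  have r1 := hGs _ h1
  have r2 := hGs _ h2
  have r3 := hGs _ h3
  have r4 := hGs _ h4
  have hz := expCoord_ne_zero z
  have hy := expCoord_ne_zero y
  have hg := expCoord_ne_zero γ
  let t : Fin 4 → ℂ := fun n => p * expCoord (l n + I * am / 4)
  have ht0 : ∀ n, t n ≠ 0 := fun n => mul_ne_zero hp0 (expCoord_ne_zero _)
  have hhalf : I * ((ap + am) / 2) = I * ap / 2 + c := by
    rw [hc]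
    ring
  have hs : expCoord (I * am / 4) * expCoord (I * am / 4) = m := by
    rw [← expCoord_add, ← hEm, hc]
    congr 1
    ring
  have hγ' : expCoord γ ^ 2 = expCoord (∑ n, l n) * (p ^ 2 * m ^ 2) := by
    have h := hγ
    rw [← expCoord, show 2 * I * ((ap + am) / 2) = (I * ap / 2 + I * ap / 2) + (c + c) by
      rw [hc]; ring, show 4 * Real.pi * I * γ = 2 * Real.pi * I * (γ + γ) by ring,
      ← expCoord] at h
    simp only [expCoord_add, hEp, hEm] at h
    linear_combination h
  have ht : ∏ n, t n = (p ^ 2) ^ 2 * (expCoord γ / p) ^ 2 := by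
    rw [div_pow, hγ', Fin.prod_univ_four, Fin.sum_univ_four, ← hs]
    simp only [t, expCoord_add]
    field_simp
  have hk : ∀ n, p * expCoord (-l n + γ - I * ((ap + am) / 2) + I * am / 4) =
      p ^ 2 * (expCoord γ / p) / t n := by
    intro n
    have hl := expCoord_ne_zero (l n)
    have hr := expCoord_ne_zero (I * am / 4)
    simp only [t, hhalf, expCoord_add, expCoord_sub, expCoord_neg, hEp, hEm, ← hs]
    field_simp
  have key := kernel_identity hp2 (pow_ne_zero 2 hp0) ht0 (div_ne_zero hg hp0) hy ht h6 h5 hz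
  have hl : ∀ n, p * expCoord (l n + I * am / 4) = t n := fun _ => rfl
  simp only [hk, hl, expCoord_neg]
  rw [show z + c + y - γ = z + y - γ + c by ring, show z + c - y - γ = z - y - γ + c by ring,
    show -(z + c) + y - γ = -z + y - γ - c by ring, show -(z + c) - y - γ = -z - y - γ - c by ring,
    show z - c + y - γ = z + y - γ - c by ring, show z - c - y - γ = z - y - γ - c by ring,
    show -(z - c) + y - γ = -z + y - γ + c by ring, show -(z - c) - y - γ = -z - y - γ + c by ring,
    show z + (y + c) - γ = z + y - γ + c by ring, show z - (y + c) - γ = z - y - γ - c by ring,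
    show -z + (y + c) - γ = -z + y - γ + c by ring, show -z - (y + c) - γ = -z - y - γ - c by ring,
    show z + (y - c) - γ = z + y - γ - c by ring, show z - (y - c) - γ = z - y - γ + c by ring,
    show -z + (y - c) - γ = -z + y - γ - c by ring, show -z - (y - c) - γ = -z - y - γ + c by ring,
    r1, r2, r3, r4]
  simp only [hR, expCoord_add, expCoord_sub, expCoord_neg]
  rw [kernelTerm, kernelTerm, dualTerm, dualTerm] at key
  generalize expCoord z = w at *
  generalize expCoord y = v at *
  generalize expCoord γ = g at *
  rw [show p * (w * v / g) = w * v / (g / p) by field_simp,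
    show p * (w / v / g) = w / (v * (g / p)) by field_simp,
    show p * (w⁻¹ * v / g) = v / (w * (g / p)) by field_simp,
    show p * (w⁻¹ / v / g) = v⁻¹ / (w * (g / p)) by field_simp]
  rw [show w⁻¹ * v / (g / p) = v / (w * (g / p)) by field_simp,
    show w⁻¹ / (v * (g / p)) = v⁻¹ / (w * (g / p)) by field_simp,
    show w * v⁻¹ / (g / p) = w / (v * (g / p)) by field_simp] at key
  simp only [show ∀ n x, p ^ 2 * x * (g / p) / t n = p ^ 2 * (g / p) / t n * x from
    fun n x => by ring] at key
  linear_combination (Gfun p m (z + y - γ - c) * Gfun p m (z - y - γ - c) *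
    Gfun p m (-z + y - γ - c) * Gfun p m (-z - y - γ - c)) * key
/-- Theorem 4.1: the kernel identity
`A_{R,δ}(l;z)K(γ;z,y) = A_{R,δ}(k;y)K(γ;z,y)` for `δ = +,−`, where
`k_n = −l_n + γ − ia` and `exp(4πiγ) = exp(2πi(∑ l_n + 2ia))`, as an identity of
meromorphic functions of `(z,y)` (i.e. valid on a dense open set). -/
theorem statement11 (ap am : ℂ) (hap : 0 < ap.re) (ham : 0 < am.re) (γ : ℂ)
    (l : Fin 4 → ℂ)
    (hγ : Complex.exp (4 * Real.pi * I * γ) =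
      Complex.exp (2 * Real.pi * I * ((∑ n, l n) + 2 * I * ((ap + am) / 2)))) :
    ∀ δ : Bool, ∃ U : Set (ℂ × ℂ), IsOpen U ∧ Dense U ∧ ∀ p ∈ U,
      fδ ap am δ l p.1 * Kker ap am γ (p.1 + I * aof ap am (!δ) / 2) p.2 +
        fδ ap am δ l (-p.1) * Kker ap am γ (p.1 - I * aof ap am (!δ) / 2) p.2 =
      fδ ap am δ (fun n => -l n + γ - I * ((ap + am) / 2)) p.2 *
          Kker ap am γ p.1 (p.2 + I * aof ap am (!δ) / 2) +
        fδ ap am δ (fun n => -l n + γ - I * ((ap + am) / 2)) (-p.2) *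
          Kker ap am γ p.1 (p.2 - I * aof ap am (!δ) / 2) := by
  rintro (_ | _)
  · have h := kernel_identity_true am ap ham hap γ l (by rwa [add_comm am ap])
    have hf : ∀ l z, fδ am ap true l z = fδ ap am false l z := fun _ _ => rfl
    simp only [hf, Kker_comm am ap, add_comm am ap] at h
    exact h
  · exact kernel_identity_true ap am hap ham γ l hγ
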